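/- The quasi-consecutive patterns 1̲3̲2̲4 and 1̲4̲2̲3 are des-Wilf-equivalent: for all n ≥ 1 and k ≥ 0, the number of permutations of length n avoiding 1̲3̲2̲4 with exactly k descents equals the number of permutations of length n avoiding 1̲4̲2̲3 with exactly k descents. -/

import Mathlib

open scoped Classical

/-- The number of descents of a permutation of `Fin n` (one-line notation `π 0, π 1, …`). -/
def des {n : ℕ} (π : Equiv.Perm (Fin n)) : ℕ :=
  (Finset.univ.filter fun i : Fin n =>
    ∃ h : (i : ℕ) + 1 < n, π ⟨(i : ℕ) + 1, h⟩ < π i).card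

/-- `π` avoids the quasi-consecutive pattern 1̲3̲2̲4: there are no (0-indexed) positions
`i` and `j` with `i + 3 ≤ j < n` such that π_i < π_{i+2} < π_{i+1} < π_j. -/
def AvoidsA {n : ℕ} (π : Equiv.Perm (Fin n)) : Prop :=
  ¬ ∃ (i j : ℕ) (hj : j < n) (hij : i + 3 ≤ j), π ⟨i, by omega⟩ < π ⟨i + 2, by omega⟩ ∧ π ⟨i + 2, by omega⟩ < π ⟨i + 1, by omega⟩ ∧ π ⟨i + 1, by omega⟩ < π ⟨j, hj⟩

/-- `π` avoids the quasi-consecutive pattern 1̲4̲2̲3: there are no (0-indexed) positions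
`i` and `j` with `i + 3 ≤ j < n` such that π_i < π_{i+2} < π_j < π_{i+1}. -/
def AvoidsB {n : ℕ} (π : Equiv.Perm (Fin n)) : Prop :=
  ¬ ∃ (i j : ℕ) (hj : j < n) (hij : i + 3 ≤ j), π ⟨i, by omega⟩ < π ⟨i + 2, by omega⟩ ∧ π ⟨i + 2, by omega⟩ < π ⟨j, hj⟩ ∧ π ⟨j, hj⟩ < π ⟨i + 1, by omega⟩

namespace QC

/-- Prepend a first entry `p` to a permutation, standardizing the rest. -/
def cons {n : ℕ} (p : Fin (n+1)) (σ : Equiv.Perm (Fin n)) : Equiv.Perm (Fin (n+1)) :=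
  ((finSuccEquiv' 0).trans (Equiv.optionCongr σ)).trans (finSuccEquiv' p).symm

lemma cons_zero {n : ℕ} (p : Fin (n+1)) (σ : Equiv.Perm (Fin n)) : cons p σ 0 = p := by
  simp [cons]

lemma cons_succ {n : ℕ} (p : Fin (n+1)) (σ : Equiv.Perm (Fin n)) (i : Fin n) :
    cons p σ i.succ = p.succAbove (σ i) := by
  have : finSuccEquiv' (0 : Fin (n+1)) i.succ = some i := by
    rw [← Fin.succAbove_zero]; exact finSuccEquiv'_succAbove 0 i
  simp [cons, this]

lemma cons_injective {n : ℕ} :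
    Function.Injective (fun q : Fin (n+1) × Equiv.Perm (Fin n) => cons q.1 q.2) := by
  rintro ⟨p, σ⟩ ⟨p', σ'⟩ h
  simp only at h
  have h0 : p = p' := by rw [← cons_zero p σ, h, cons_zero]
  subst h0
  have : σ = σ' := by
    ext i
    have := congrArg (fun e => e i.succ) h
    simp only [cons_succ] at this
    rw [Fin.succAbove_right_injective this]
  rw [this]

lemma cons_bijective {n : ℕ} :
    Function.Bijective (fun q : Fin (n+1) × Equiv.Perm (Fin n) => cons q.1 q.2) := by
  rw [Fintype.bijective_iff_injective_and_card]
  refine ⟨cons_injective, ?_⟩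
  simp [Fintype.card_perm, Nat.factorial_succ]

lemma sum_cons {n : ℕ} (f : Equiv.Perm (Fin (n+1)) → ℕ) :
    ∑ π, f π = ∑ σ : Equiv.Perm (Fin n), ∑ p : Fin (n+1), f (cons p σ) := by
  rw [← cons_bijective.sum_comp f, Fintype.sum_prod_type_right]

lemma lt_cons {n : ℕ} (p : Fin (n+1)) (σ : Equiv.Perm (Fin n)) (i : Fin n) :
    cons p σ 0 < cons p σ i.succ ↔ p.val ≤ (σ i).val := by
  rw [cons_zero, cons_succ, Fin.lt_succAbove_iff_le_castSucc]; rfl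

lemma cons_lt {n : ℕ} (p : Fin (n+1)) (σ : Equiv.Perm (Fin n)) (i : Fin n) :
    cons p σ i.succ < cons p σ 0 ↔ (σ i).val < p.val := by
  rw [cons_zero, cons_succ, Fin.succAbove_lt_iff_castSucc_lt]; rfl

lemma cons_lt_cons {n : ℕ} (p : Fin (n+1)) (σ : Equiv.Perm (Fin n)) (i j : Fin n) :
    cons p σ i.succ < cons p σ j.succ ↔ σ i < σ j := by
  rw [cons_succ, cons_succ, Fin.succAbove_lt_succAbove_iff]

lemma des_cons {n : ℕ} (p : Fin (n+2)) (σ : Equiv.Perm (Fin (n+1))) :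
    des (cons p σ) = des σ + if (σ 0).val < p.val then 1 else 0 := by
  unfold des
  rw [Finset.card_filter, Finset.card_filter, Fin.sum_univ_succ, add_comm]
  congr 1
  · refine Finset.sum_congr rfl fun i _ => ?_
    refine if_congr ?_ rfl rfl
    constructor
    · rintro ⟨h, h'⟩
      have h2 : i.val + 1 < n + 1 := by simpa using h
      exact ⟨h2, (cons_lt_cons p σ ⟨i.val+1, h2⟩ i).1 h'⟩
    · rintro ⟨h, h'⟩
      exact ⟨by simpa using h, (cons_lt_cons p σ ⟨i.val+1, h⟩ i).2 h'⟩
  · refine if_congr ?_ rfl rfl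
    constructor
    · rintro ⟨h, h'⟩
      exact (cons_lt p σ 0).1 h'
    · intro h
      exact ⟨by simp, (cons_lt p σ 0).2 h⟩

/-- Abstract form of the step rule for both patterns. -/
structure Rule (Av : ∀ n, Equiv.Perm (Fin n) → Prop) (free : ℕ → ℕ → ℕ → Prop) : Prop where
  small : ∀ n (π : Equiv.Perm (Fin n)), n ≤ 3 → Av n π
  step : ∀ m (p : Fin (m+3)) (σ : Equiv.Perm (Fin (m+2))), Av (m+3) (cons p σ) ↔
    Av (m+2) σ ∧ ((σ 1).val < (σ 0).val → p.val ≤ (σ 1).val → free (m+1) (σ 0).val (σ 1).val)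

lemma avoidsA_cons (m : ℕ) (p : Fin (m+3)) (σ : Equiv.Perm (Fin (m+2))) :
    AvoidsA (cons p σ) ↔ AvoidsA σ ∧ 
      ((σ 1).val < (σ 0).val → p.val ≤ (σ 1).val → (σ 0).val = m+1) := by
  constructor
  · intro h
    refine ⟨?_, ?_⟩
    · rintro ⟨i, j, hj, hij, h1, h2, h3⟩
      exact h ⟨i+1, j+1, by omega, by omega, (cons_lt_cons p σ ⟨i, by omega⟩ ⟨i+2, by omega⟩).2 h1,
        (cons_lt_cons p σ ⟨i+2, by omega⟩ ⟨i+1, by omega⟩).2 h2,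
        (cons_lt_cons p σ ⟨i+1, by omega⟩ ⟨j, by omega⟩).2 h3⟩
    · intro h1 h2
      by_contra h3
      obtain ⟨j, hj⟩ := σ.surjective (Fin.last (m+1))
      have hjv : (σ j).val = m+1 := by rw [hj]; rfl
      have hj0 : j ≠ 0 := by rintro rfl; omega
      have hj1 : j ≠ 1 := by rintro rfl; omega
      have hj2 : 2 ≤ j.val := by
        have a : j.val ≠ 0 := fun e => hj0 (Fin.ext e)
        have b : j.val ≠ 1 := fun e => hj1 (Fin.ext e)
        omega
      refine h ⟨0, j.val+1, by omega, by omega, (lt_cons p σ 1).2 h2, (cons_lt_cons p σ 1 0).2 h1,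
        (cons_lt_cons p σ 0 j).2 ?_⟩
      rw [Fin.lt_def]; omega
  · rintro ⟨h, h'⟩ ⟨i, j, hj, hij, h1, h2, h3⟩
    obtain ⟨j, rfl⟩ : ∃ j', j = j'+1 := ⟨j-1, by omega⟩
    rcases i with _ | i
    · have h1' := (lt_cons p σ 1).1 h1
      have h2' := (cons_lt_cons p σ 1 0).1 h2
      have h3' := (cons_lt_cons p σ 0 ⟨j, by omega⟩).1 h3
      have := h' h2' h1'
      rw [Fin.lt_def] at h3'
      omega
    · exact h ⟨i, j, by omega, by omega, (cons_lt_cons p σ ⟨i, by omega⟩ ⟨i+2, by omega⟩).1 h1,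
        (cons_lt_cons p σ ⟨i+2, by omega⟩ ⟨i+1, by omega⟩).1 h2,
        (cons_lt_cons p σ ⟨i+1, by omega⟩ ⟨j, by omega⟩).1 h3⟩

lemma avoidsB_cons (m : ℕ) (p : Fin (m+3)) (σ : Equiv.Perm (Fin (m+2))) :
    AvoidsB (cons p σ) ↔ AvoidsB σ ∧ 
      ((σ 1).val < (σ 0).val → p.val ≤ (σ 1).val → (σ 0).val = (σ 1).val+1) := by
  constructor
  · intro h
    refine ⟨?_, ?_⟩
    · rintro ⟨i, j, hj, hij, h1, h2, h3⟩
      exact h ⟨i+1, j+1, by omega, by omega, (cons_lt_cons p σ ⟨i, by omega⟩ ⟨i+2, by omega⟩).2 h1,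
        (cons_lt_cons p σ ⟨i+2, by omega⟩ ⟨j, by omega⟩).2 h2,
        (cons_lt_cons p σ ⟨j, by omega⟩ ⟨i+1, by omega⟩).2 h3⟩
    · intro h1 h2
      by_contra h3
      obtain ⟨j, hj⟩ := σ.surjective ⟨(σ 1).val+1, by omega⟩
      have hjv : (σ j).val = (σ 1).val+1 := by rw [hj]
      have hj0 : j ≠ 0 := by rintro rfl; omega
      have hj1 : j ≠ 1 := by rintro rfl; omega
      have hj2 : 2 ≤ j.val := by
        have a : j.val ≠ 0 := fun e => hj0 (Fin.ext e)
        have b : j.val ≠ 1 := fun e => hj1 (Fin.ext e)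
        omega
      refine h ⟨0, j.val+1, by omega, by omega, (lt_cons p σ 1).2 h2,
        (cons_lt_cons p σ 1 j).2 ?_, (cons_lt_cons p σ j 0).2 ?_⟩
      · rw [Fin.lt_def]; omega
      · rw [Fin.lt_def]; omega
  · rintro ⟨h, h'⟩ ⟨i, j, hj, hij, h1, h2, h3⟩
    obtain ⟨j, rfl⟩ : ∃ j', j = j'+1 := ⟨j-1, by omega⟩
    rcases i with _ | i
    · have h1' := (lt_cons p σ 1).1 h1
      have h2' := (cons_lt_cons p σ 1 ⟨j, by omega⟩).1 h2
      have h3' := (cons_lt_cons p σ ⟨j, by omega⟩ 0).1 h3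
      have := h' (h2'.trans h3') h1'
      rw [Fin.lt_def] at h3' h2'
      omega
    · exact h ⟨i, j, by omega, by omega, (cons_lt_cons p σ ⟨i, by omega⟩ ⟨i+2, by omega⟩).1 h1,
        (cons_lt_cons p σ ⟨i+2, by omega⟩ ⟨j, by omega⟩).1 h2,
        (cons_lt_cons p σ ⟨j, by omega⟩ ⟨i+1, by omega⟩).1 h3⟩

lemma ruleA : Rule (fun n => @AvoidsA n) (fun M x _ => x = M) where
  small := by
    rintro n π hn ⟨i, j, hj, hij, _⟩
    omega
  step := avoidsA_cons

lemma ruleB : Rule (fun n => @AvoidsB n) (fun _ x y => x = y + 1) where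
  small := by
    rintro n π hn ⟨i, j, hj, hij, _⟩
    omega
  step := avoidsB_cons

variable {Av : ∀ n, Equiv.Perm (Fin n) → Prop} {free : ℕ → ℕ → ℕ → Prop}

lemma Rule.desc (R : Rule Av free) (m : ℕ) (p : Fin (m+2)) (σ : Equiv.Perm (Fin (m+1)))
    (h : (σ 0).val < p.val) : Av _ (cons p σ) ↔ Av _ σ := by
  rcases m with _ | m
  · exact iff_of_true (R.small _ _ (by omega)) (R.small _ _ (by omega))
  · rw [R.step]
    constructor
    · exact fun h => h.1
    · exact fun h => ⟨h, by omega⟩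

lemma Rule.desc_sum (R : Rule Av free) (m : ℕ) (K : ℕ → ℕ → ℕ → ℕ) :
    (∑ π : Equiv.Perm (Fin (m+2)),
      if Av _ π ∧ π 1 < π 0 then K (des π) (π 0).val (π 1).val else 0) =
    ∑ σ : Equiv.Perm (Fin (m+1)), if Av _ σ then
      (∑ x ∈ Finset.range (m+2), if (σ 0).val < x then K (des σ + 1) x (σ 0).val else 0) else 0 := by
  rw [sum_cons]
  refine Finset.sum_congr rfl fun σ _ => ?_
  rw [← Fin.sum_univ_eq_sum_range
    (fun x => if (σ 0).val < x then K (des σ + 1) x (σ 0).val else 0)]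
  by_cases hA : Av _ σ
  · rw [if_pos hA]
    refine Finset.sum_congr rfl fun p _ => ?_
    by_cases hp : (σ 0).val < p.val
    · have h1 : cons p σ 1 < cons p σ 0 := (cons_lt p σ 0).2 hp
      have h2 : (cons p σ 1).val = (σ 0).val := by
        have : cons p σ 1 = p.succAbove (σ 0) := cons_succ p σ 0
        rw [this, Fin.succAbove_of_castSucc_lt _ _ (by rw [Fin.lt_def]; exact hp)]; rfl
      rw [if_pos ⟨(R.desc m p σ hp).2 hA, h1⟩, if_pos hp, des_cons, if_pos hp, h2, cons_zero]
    · have h1 : ¬ cons p σ 1 < cons p σ 0 := fun h => hp ((cons_lt p σ 0).1 h)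
      rw [if_neg (fun h => h1 h.2), if_neg hp]
  · rw [if_neg hA]
    refine Finset.sum_eq_zero fun p _ => ?_
    rw [if_neg]
    rintro ⟨h, h1⟩
    exact hA ((R.desc m p σ ((cons_lt p σ 0).1 h1)).1 h)

lemma Rule.asc_sum (R : Rule Av free) (m : ℕ) (F : ℕ → ℕ → ℕ) :
    (∑ π : Equiv.Perm (Fin (m+3)), if Av _ π ∧ π 0 < π 1 then F (des π) (π 0).val else 0) =
    ∑ σ : Equiv.Perm (Fin (m+2)), if Av _ σ then
      (∑ a ∈ Finset.range (m+3), if a ≤ (σ 0).val ∧ ((σ 1).val < (σ 0).val → a ≤ (σ 1).val →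
        free (m+1) (σ 0).val (σ 1).val) then F (des σ) a else 0) else 0 := by
  rw [sum_cons]
  refine Finset.sum_congr rfl fun σ _ => ?_
  rw [← Fin.sum_univ_eq_sum_range
    (fun a => if a ≤ (σ 0).val ∧ ((σ 1).val < (σ 0).val → a ≤ (σ 1).val →
        free (m+1) (σ 0).val (σ 1).val) then F (des σ) a else 0)]
  have key : ∀ p : Fin (m+3), cons p σ 0 < cons p σ 1 ↔ p.val ≤ (σ 0).val :=
    fun p => lt_cons p σ 0
  by_cases hA : Av _ σ
  · rw [if_pos hA]
    refine Finset.sum_congr rfl fun p _ => ?_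
    rw [des_cons, if_congr (and_congr (R.step m p σ) (key p)) rfl rfl, cons_zero]
    by_cases hp : p.val ≤ (σ 0).val
    · rw [if_neg (not_lt.2 hp)]
      refine if_congr ?_ rfl rfl
      tauto
    · rw [if_neg (fun h => hp h.2), if_neg (fun h => hp h.1)]
  · rw [if_neg hA]
    refine Finset.sum_eq_zero fun p _ => ?_
    rw [if_neg]
    rintro ⟨h, -⟩
    exact hA ((R.step m p σ).1 h).1

/-- Splitting a sum by the first ascent / descent. -/
lemma split_sum (m : ℕ) (P : Equiv.Perm (Fin (m+2)) → Prop) (f : Equiv.Perm (Fin (m+2)) → ℕ) :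
    (∑ π, if P π then f π else 0) =
      (∑ π, if P π ∧ π 0 < π 1 then f π else 0) + ∑ π, if P π ∧ π 1 < π 0 then f π else 0 := by
  rw [← Finset.sum_add_distrib]
  refine Finset.sum_congr rfl fun π _ => ?_
  have hne : π 0 ≠ π 1 := fun h => by simpa using π.injective h
  rcases lt_or_gt_of_ne hne with h | h
  · simp [h, not_lt.2 h.le]
  · have h' : π 1 < π 0 := h
    simp [h', not_lt.2 h'.le]

lemma inner_split (N x y : ℕ) (hxy : y < x) (Q : Prop) [Decidable Q] (f : ℕ → ℕ) :
    (∑ a ∈ Finset.range N, if a ≤ x ∧ (y < x → a ≤ y → Q) then f a else 0) =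
    (∑ a ∈ Finset.range N, if a ≤ x ∧ y < a then f a else 0) +
      if Q then (∑ a ∈ Finset.range N, if a ≤ y then f a else 0) else 0 := by
  by_cases hQ : Q
  · rw [if_pos hQ, ← Finset.sum_add_distrib]
    refine Finset.sum_congr rfl fun a _ => ?_
    by_cases h1 : a ≤ y
    · simp [h1, hQ, h1.trans hxy.le, not_lt.2 h1]
    · simp [h1, hQ, not_le.1 h1]
  · rw [if_neg hQ, add_zero]
    refine Finset.sum_congr rfl fun a _ => ?_
    refine if_congr ?_ rfl rfl
    simp [hQ, hxy]

lemma pointwise (M y : ℕ) (hy : y < M) (f : ℕ → ℕ) :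
    (∑ x ∈ Finset.range (M+1), if y < x then
      (∑ a ∈ Finset.range (M+2), if a ≤ x ∧ (y < x → a ≤ y → x = M) then f a else 0) else 0) =
    (∑ x ∈ Finset.range (M+1), if y < x then
      (∑ a ∈ Finset.range (M+2), if a ≤ x ∧ (y < x → a ≤ y → x = y + 1) then f a else 0) else 0) := by
  have gen : ∀ z, y < z → z < M + 1 → 
    (∑ x ∈ Finset.range (M+1), if y < x then
      (∑ a ∈ Finset.range (M+2), if a ≤ x ∧ (y < x → a ≤ y → x = z) then f a else 0) else 0) =
    (∑ x ∈ Finset.range (M+1), if y < x then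
      (∑ a ∈ Finset.range (M+2), if a ≤ x ∧ y < a then f a else 0) else 0) +
    (∑ a ∈ Finset.range (M+2), if a ≤ y then f a else 0) := by
    intro z hz hzM
    have : (∑ x ∈ Finset.range (M+1), if x = z then
        (∑ a ∈ Finset.range (M+2), if a ≤ y then f a else 0) else 0) =
        (∑ a ∈ Finset.range (M+2), if a ≤ y then f a else 0) := by
      rw [Finset.sum_ite_eq', if_pos (Finset.mem_range.2 hzM)]
    rw [← this, ← Finset.sum_add_distrib]
    refine Finset.sum_congr rfl fun x _ => ?_
    by_cases hx : y < x
    · rw [if_pos hx, if_pos hx]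
      exact inner_split (M+2) x y hx (x = z) f
    · have : x ≠ z := by omega
      rw [if_neg hx, if_neg hx, if_neg this]
  rw [gen M hy (by omega), gen (y+1) (by omega) (by omega)]

/-- Descent-headed sums agree as soon as all sums of one size less agree. -/
lemma desc_eq (m : ℕ)
    (Q : ∀ F : ℕ → ℕ → ℕ,
      (∑ π : Equiv.Perm (Fin (m+1)), if AvoidsA π then F (des π) (π 0).val else 0) =
      ∑ π : Equiv.Perm (Fin (m+1)), if AvoidsB π then F (des π) (π 0).val else 0)
    (K : ℕ → ℕ → ℕ → ℕ) (L : ℕ → ℕ → ℕ → ℕ)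
    (hKL : ∀ d y, y < m + 1 → (∑ x ∈ Finset.range (m+2), if y < x then K d x y else 0) =
      ∑ x ∈ Finset.range (m+2), if y < x then L d x y else 0) :
    (∑ π : Equiv.Perm (Fin (m+2)),
      if AvoidsA π ∧ π 1 < π 0 then K (des π) (π 0).val (π 1).val else 0) =
    ∑ π : Equiv.Perm (Fin (m+2)),
      if AvoidsB π ∧ π 1 < π 0 then L (des π) (π 0).val (π 1).val else 0 := by
  rw [ruleA.desc_sum m K, ruleB.desc_sum m L,
    Q (fun d y => ∑ x ∈ Finset.range (m+2), if y < x then K (d+1) x y else 0)]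
  refine Finset.sum_congr rfl fun σ _ => ?_
  rw [hKL _ _ (σ 0).isLt]

lemma main (m : ℕ) :
    (∀ F : ℕ → ℕ → ℕ,
      (∑ π : Equiv.Perm (Fin (m+1)), if AvoidsA π then F (des π) (π 0).val else 0) =
      ∑ π : Equiv.Perm (Fin (m+1)), if AvoidsB π then F (des π) (π 0).val else 0) ∧
    (∀ F : ℕ → ℕ → ℕ,
      (∑ π : Equiv.Perm (Fin (m+2)), if AvoidsA π ∧ π 0 < π 1 then F (des π) (π 0).val else 0) =
      ∑ π : Equiv.Perm (Fin (m+2)), if AvoidsB π ∧ π 0 < π 1 then F (des π) (π 0).val else 0) := by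
  induction m with
  | zero =>
    constructor
    · intro F
      refine Finset.sum_congr rfl fun π _ => ?_
      rw [if_pos (ruleA.small _ π (by omega)), if_pos (ruleB.small _ π (by omega))]
    · intro F
      refine Finset.sum_congr rfl fun π _ => ?_
      have a : AvoidsA π := ruleA.small _ π (by omega)
      have b : AvoidsB π := ruleB.small _ π (by omega)
      simp [a, b]
  | succ m ih =>
    obtain ⟨Q, R⟩ := ih
    constructor
    · intro F
      rw [split_sum m AvoidsA, split_sum m AvoidsB, R F]
      congr 1
      exact desc_eq m Q (fun d x _ => F d x) (fun d x _ => F d x) (fun _ _ _ => rfl)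
    · intro F
      have hA := ruleA.asc_sum m F
      have hB := ruleB.asc_sum m F
      rw [split_sum m] at hA hB
      refine hA.trans (Eq.trans ?_ hB.symm)
      congr 1
      · have R' := R (fun d x => ∑ a ∈ Finset.range (m+3), if a ≤ x then F d a else 0)
        refine Eq.trans ?_ (R'.trans ?_)
        · refine Finset.sum_congr rfl fun σ _ => ?_
          by_cases h : AvoidsA σ ∧ σ 0 < σ 1
          · have h2 : ¬ (σ 1).val < (σ 0).val := not_lt.2 (le_of_lt h.2)
            simp only [h2, false_imp_iff, and_true]
          · rw [if_neg h, if_neg h]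
        · refine Finset.sum_congr rfl fun σ _ => ?_
          by_cases h : AvoidsB σ ∧ σ 0 < σ 1
          · have h2 : ¬ (σ 1).val < (σ 0).val := not_lt.2 (le_of_lt h.2)
            simp only [h2, false_imp_iff, and_true]
          · rw [if_neg h, if_neg h]
      · convert desc_eq m Q
          (fun d x y => ∑ a ∈ Finset.range (m+3),
            if a ≤ x ∧ (y < x → a ≤ y → x = m + 1) then F d a else 0)
          (fun d x y => ∑ a ∈ Finset.range (m+3),
            if a ≤ x ∧ (y < x → a ≤ y → x = y + 1) then F d a else 0)
          (fun d y hy => pointwise (m+1) y hy (F d))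

lemma card_eq_sum {n : ℕ} (P : Equiv.Perm (Fin n) → Prop) (k : ℕ) :
    Nat.card {π : Equiv.Perm (Fin n) // P π ∧ des π = k} =
      ∑ π : Equiv.Perm (Fin n), if P π then (if des π = k then 1 else 0) else 0 := by
  rw [Nat.card_eq_fintype_card, Fintype.card_subtype, Finset.card_filter]
  refine Finset.sum_congr rfl fun π _ => ?_
  by_cases h : P π <;> simp [h]

end QC

/-- The quasi-consecutive patterns 1̲3̲2̲4 and 1̲4̲2̲3 are des-Wilf-equivalent. -/
theorem statement16 (n : ℕ) (hn : 1 ≤ n) (k : ℕ) :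
    Nat.card {π : Equiv.Perm (Fin n) // AvoidsA π ∧ des π = k} =
      Nat.card {π : Equiv.Perm (Fin n) // AvoidsB π ∧ des π = k} := by
  obtain ⟨m, rfl⟩ : ∃ m, n = m + 1 := ⟨n - 1, by omega⟩
  rw [QC.card_eq_sum, QC.card_eq_sum]
  exact (QC.main m).1 (fun d _ => if d = k then 1 else 0)
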